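/- Let v be a smooth nowhere-zero vector field on an open set U ⊆ ℝ³ admitting a smooth Serret–Frenet frame, i.e., smooth vector fields (t, n, b) forming a right-handed orthonormal frame at every point of U with t = v/‖v‖. Then every point x₀ ∈ U has an open neighborhood V ⊆ U on which there exist two smooth vector fields J₁ and J₂ such that: J₁ and J₂ are pointwise linearly independent on V, J₁·v = 0 and J₂·v = 0 on V, each satisfies the Jacobi identity J_i·(curl J_i) = 0 on V, and they are compatible: J₁·(curl J₂) + J₂·(curl J₁) = 0 on V. -/

import Mathlib

/-!
The two Poisson vectors are gradients `∇f₁`, `∇f₂` of local first integrals of `v`. Gradients have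
zero curl, so the Jacobi identities and the compatibility condition hold at once; orthogonality to
`v` says that `f₁`, `f₂` are constant along `v`, and linear independence that they are functionally
independent. What has to be proved is thus the smooth straightening theorem
(`exists_straightening`): near a point where `v ≠ 0` there are smooth coordinates in which `v` is a
constant field.

The straightening map is the flow of `v` out of a plane transverse to `v x₀`, and its smoothness
rests on the smooth dependence of the flow on time and initial position (`exists_smooth_flow`).
This is obtained from the inverse function theorem in a space of paths, applied to
`(ε, x, γ) ↦ (ε, x, γ - x - ε ∫ v ∘ γ)` near `ε = 0` and `γ` constant, where the derivative is a
shear. For a zero `γ` of the last component, `γ(1)` is the flow of `v` at time `ε` from `x`. The map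
is smooth because superposition operators `γ ↦ v ∘ γ` on `C([0, 1], E)` are as smooth as `v`
(`contDiff_superposition`). The flow equation `∂γ(1)/∂ε = v(γ(1))` follows by checking that
`s ↦ s v(γ(s))` solves the linearized equation (`variation_equation`), whose solution is unique by
invertibility of the derivative. A bump function reduces everything to globally defined fields.
-/

noncomputable section

/-- Three-dimensional Euclidean space. -/
abbrev E3 : Type := EuclideanSpace ℝ (Fin 3)

/-- The Euclidean dot product on ℝ³. -/
def dot (u v : E3) : ℝ := ∑ i, u i * v i

/-- The cross product on ℝ³. -/
def cross (u v : E3) : E3 :=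
  (WithLp.equiv 2 (Fin 3 → ℝ)).symm
    ![u 1 * v 2 - u 2 * v 1, u 2 * v 0 - u 0 * v 2, u 0 * v 1 - u 1 * v 0]

/-- Partial derivative of a scalar function in the `i`-th coordinate direction. -/
def pd (i : Fin 3) (f : E3 → ℝ) (x : E3) : ℝ :=
  fderiv ℝ f x (EuclideanSpace.single i 1)

/-- The gradient ∇f of a scalar function. -/
def grad (f : E3 → ℝ) (x : E3) : E3 :=
  (WithLp.equiv 2 (Fin 3 → ℝ)).symm ![pd 0 f x, pd 1 f x, pd 2 f x]

/-- The curl ∇×F of a vector field. -/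
def curl (F : E3 → E3) (x : E3) : E3 :=
  (WithLp.equiv 2 (Fin 3 → ℝ)).symm
    ![pd 1 (fun y => F y 2) x - pd 2 (fun y => F y 1) x,
      pd 2 (fun y => F y 0) x - pd 0 (fun y => F y 2) x,
      pd 0 (fun y => F y 1) x - pd 1 (fun y => F y 0) x]

/-- Directional derivative ∂ₛ f = t·∇f of a scalar function along a vector field t. -/
def ds (t : E3 → E3) (f : E3 → ℝ) (x : E3) : ℝ := dot (t x) (grad f x)

/-- Componentwise directional derivative (u·∇)w of a vector field w along u. -/
def dirDeriv (u w : E3 → E3) (x : E3) : E3 :=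
  (WithLp.equiv 2 (Fin 3 → ℝ)).symm
    ![fderiv ℝ (fun y => w y 0) x (u x),
      fderiv ℝ (fun y => w y 1) x (u x),
      fderiv ℝ (fun y => w y 2) x (u x)]

/-- Helicity density w·(curl w) of a vector field. -/
def hel (w : E3 → E3) (x : E3) : ℝ := dot (w x) (curl w x)

/-- Cross-helicity sum n·(curl b) + b·(curl n). -/
def crossHel (n b : E3 → E3) (x : E3) : ℝ :=
  dot (n x) (curl b x) + dot (b x) (curl n x)

/-- A smooth right-handed orthonormal (Serret–Frenet type) frame on U. -/
def IsFrameOn (t n b : E3 → E3) (U : Set E3) : Prop :=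
  ContDiffOn ℝ (⊤ : ℕ∞) t U ∧ ContDiffOn ℝ (⊤ : ℕ∞) n U ∧ ContDiffOn ℝ (⊤ : ℕ∞) b U ∧
  ∀ x ∈ U, ‖t x‖ = 1 ∧ ‖n x‖ = 1 ∧ ‖b x‖ = 1 ∧
    dot (t x) (n x) = 0 ∧ dot (t x) (b x) = 0 ∧ dot (n x) (b x) = 0 ∧
    b x = cross (t x) (n x)

/-! ### Inverse function theorem -/

section SmoothInverse

variable {X Y : Type*} [NormedAddCommGroup X] [NormedSpace ℝ X] [CompleteSpace X]
  [NormedAddCommGroup Y] [NormedSpace ℝ Y]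

/-- Inverse function theorem in class `C^∞`, on a whole neighbourhood: the domain is cut down to the
open set of points where the derivative stays invertible, so that the inverse is smooth at every
point of the target and not only at the image of the base point. -/
theorem exists_smooth_openPartialHomeomorph {G : X → Y} {O : Set X} (hO : IsOpen O)
    (hG : ContDiffOn ℝ (⊤ : ℕ∞) G O) {p₀ : X} (hp₀ : p₀ ∈ O) (A : X ≃L[ℝ] Y)
    (hA : HasFDerivAt G (A : X →L[ℝ] Y) p₀) :
    ∃ e : OpenPartialHomeomorph X Y, p₀ ∈ e.source ∧ e.source ⊆ O ∧ (∀ p, e p = G p) ∧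
      (∀ p ∈ e.source, ∃ B : X ≃L[ℝ] Y, HasFDerivAt G (B : X →L[ℝ] Y) p) ∧
      ContDiffOn ℝ (⊤ : ℕ∞) e.symm e.target := by
  have hGat : ∀ p ∈ O, ContDiffAt ℝ (⊤ : ℕ∞) G p := fun p hp => hG.contDiffAt (hO.mem_nhds hp)
  have hne : ((⊤ : ℕ∞) : WithTop ℕ∞) ≠ 0 := by simp
  let e₀ := (hGat p₀ hp₀).toOpenPartialHomeomorph G hA hne
  let S : Set X := O ∩ fderiv ℝ G ⁻¹' Set.range ((↑) : (X ≃L[ℝ] Y) → X →L[ℝ] Y)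
  have hS : IsOpen S :=
    (hG.continuousOn_fderiv_of_isOpen hO (by simp)).isOpen_inter_preimage hO
      ContinuousLinearEquiv.isOpen
  have hinv : ∀ p ∈ S, ∃ B : X ≃L[ℝ] Y, HasFDerivAt G (B : X →L[ℝ] Y) p := by
    rintro p ⟨hpO, B, hB⟩
    exact ⟨B, hB ▸ ((hGat p hpO).differentiableAt hne).hasFDerivAt⟩
  have hsrc : (e₀.restrOpen S hS).source ⊆ S := fun p hp => hp.2
  refine ⟨e₀.restrOpen S hS, ⟨?_, hp₀, A, ?_⟩, fun p hp => (hsrc hp).1, fun p => rfl,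
    fun p hp => hinv p (hsrc hp), fun q hq => ?_⟩
  · exact (hGat p₀ hp₀).mem_toOpenPartialHomeomorph_source hA hne
  · exact hA.fderiv.symm
  · have hp := hsrc ((e₀.restrOpen S hS).map_target hq)
    obtain ⟨B, hB⟩ := hinv _ hp
    exact ((e₀.restrOpen S hS).contDiffAt_symm hq hB (hGat _ hp.1)).contDiffWithinAt

end SmoothInverse

/-! ### Superposition operators on spaces of paths -/

section Superposition

universe u

variable {K : Type*} [TopologicalSpace K] [CompactSpace K]
variable {E F : Type u} [NormedAddCommGroup E] [NormedSpace ℝ E]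
  [NormedAddCommGroup F] [NormedSpace ℝ F]

/-- Pointwise application of a continuous family of operators to a continuous path, as a continuous
bilinear map. -/
def pointwiseApply (K : Type*) [TopologicalSpace K] [CompactSpace K]
    (E F : Type u) [NormedAddCommGroup E] [NormedSpace ℝ E]
    [NormedAddCommGroup F] [NormedSpace ℝ F] :
    C(K, E →L[ℝ] F) →L[ℝ] C(K, E) →L[ℝ] C(K, F) :=
  LinearMap.mkContinuous₂
    (LinearMap.mk₂ ℝ
      (fun (a : C(K, E →L[ℝ] F)) (h : C(K, E)) =>
        (⟨fun s => a s (h s), a.continuous.clm_apply h.continuous⟩ : C(K, F)))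
      (fun a a' h => by ext s; simp) (fun c a h => by ext s; simp)
      (fun a h h' => by ext s; simp) (fun c a h => by ext s; simp)) 1
    (fun a h => by
      rw [ContinuousMap.norm_le _ (by positivity), one_mul]
      exact fun s => (a s).le_of_opNorm_le_of_le (a.norm_coe_le_norm s) (h.norm_coe_le_norm s))

@[simp]
theorem pointwiseApply_apply (a : C(K, E →L[ℝ] F)) (h : C(K, E)) (s : K) :
    pointwiseApply K E F a h s = a s (h s) := rfl

theorem hasFDerivAt_superposition {f : E → F} (hf : ContDiff ℝ 1 f) (γ : C(K, E)) :
    HasFDerivAt (fun γ : C(K, E) => (⟨f, hf.continuous⟩ : C(E, F)).comp γ)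
      (pointwiseApply K E F
        ((⟨fderiv ℝ f, hf.continuous_fderiv (by simp)⟩ : C(E, E →L[ℝ] F)).comp γ)) γ := by
  have hcont : Continuous (fderiv ℝ f) := hf.continuous_fderiv (by simp)
  have hdiff : Differentiable ℝ f := hf.differentiable (by simp)
  rw [hasFDerivAt_iff_isLittleO, Asymptotics.isLittleO_iff]
  intro c hc
  -- The derivative of `f` is uniformly close to its values along the compact path `γ`.
  have hK : IsCompact (Set.range γ) := isCompact_range γ.continuous
  have hu := hK.uniformContinuousAt_of_continuousAt (fderiv ℝ f)
    (fun x _ => hcont.continuousAt) (Metric.dist_mem_uniformity hc)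
  obtain ⟨δ, hδ, hδ'⟩ := Metric.mem_uniformity_dist.1 hu
  filter_upwards [Metric.ball_mem_nhds γ hδ] with η hη
  rw [ContinuousMap.norm_le _ (by positivity)]
  intro s
  have hs : η s ∈ Metric.ball (γ s) δ :=
    (ContinuousMap.dist_apply_le_dist s).trans_lt hη
  have hmv := (convex_ball (γ s) δ).norm_image_sub_le_of_norm_hasFDerivWithin_le'
    (f := f) (f' := fderiv ℝ f) (φ := fderiv ℝ f (γ s)) (C := c)
    (fun x _ => (hdiff x).hasFDerivAt.hasFDerivWithinAt)
    (fun x hx => by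
      have := hδ' (a := γ s) (b := x) (by rwa [dist_comm]) ⟨s, rfl⟩
      rw [Set.mem_ofPred_eq, dist_comm, dist_eq_norm] at this
      exact this.le)
    (Metric.mem_ball_self hδ) hs
  refine hmv.trans ?_
  gcongr
  exact (η - γ).norm_coe_le_norm s

/-- The superposition operator `γ ↦ f ∘ γ` inherits the smoothness of `f`: its derivative is the
superposition operator of `fderiv ℝ f` followed by a continuous linear map. -/
theorem contDiff_superposition_nat (n : ℕ) : ∀ {F : Type u} [NormedAddCommGroup F]
    [NormedSpace ℝ F] {f : E → F} (hf : ContDiff ℝ n f),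
    ContDiff ℝ n (fun γ : C(K, E) => (⟨f, hf.continuous⟩ : C(E, F)).comp γ) := by
  induction n with
  | zero =>
    intro F _ _ f hf
    exact contDiff_zero.2 (ContinuousMap.continuous_postcomp _)
  | succ n ih =>
    intro F _ _ f hf
    have hf1 : ContDiff ℝ 1 f := hf.of_le (by simp)
    have hf' : ContDiff ℝ n (fderiv ℝ f) := hf.fderiv_right (by simp)
    have := contDiff_succ_iff_hasFDerivAt.2 ⟨fun γ : C(K, E) => pointwiseApply K E F
        ((⟨fderiv ℝ f, hf'.continuous⟩ : C(E, E →L[ℝ] F)).comp γ),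
      (pointwiseApply K E F).contDiff.comp (ih hf'),
      fun γ => hasFDerivAt_superposition hf1 γ⟩
    exact_mod_cast this

theorem contDiff_superposition {f : E → F} (hf : ContDiff ℝ (⊤ : ℕ∞) f) :
    ContDiff ℝ (⊤ : ℕ∞) (fun γ : C(K, E) => (⟨f, hf.continuous⟩ : C(E, F)).comp γ) :=
  contDiff_infty.2 fun n => contDiff_superposition_nat n (contDiff_infty.1 hf n)

end Superposition

/-! ### Smooth dependence of the flow -/

section Flow

open Set

variable {E : Type*} [NormedAddCommGroup E]

/-- Extension of a path on `[0, 1]` to `ℝ` by constants. -/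
def extendPath (γ : C(Icc (0 : ℝ) 1, E)) (s : ℝ) : E := γ (projIcc 0 1 zero_le_one s)

theorem continuous_extendPath (γ : C(Icc (0 : ℝ) 1, E)) : Continuous (extendPath γ) :=
  γ.continuous.comp continuous_projIcc

theorem extendPath_of_mem (γ : C(Icc (0 : ℝ) 1, E)) {s : ℝ} (hs : s ∈ Icc (0 : ℝ) 1) :
    extendPath γ s = γ ⟨s, hs⟩ := by
  rw [extendPath, projIcc_of_mem _ hs]

variable [NormedSpace ℝ E]

/-- The operator sending a path `γ` on `[0, 1]` to its primitive `s ↦ ∫₀ˢ γ`. -/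
def primitiveCLM (E : Type*) [NormedAddCommGroup E] [NormedSpace ℝ E] :
    C(Icc (0 : ℝ) 1, E) →L[ℝ] C(Icc (0 : ℝ) 1, E) :=
  LinearMap.mkContinuous
    { toFun := fun γ => ⟨fun s => ∫ σ in (0 : ℝ)..s, extendPath γ σ,
        (intervalIntegral.continuous_primitive
          (fun _ _ => (continuous_extendPath γ).intervalIntegrable _ _) 0).comp
            continuous_subtype_val⟩
      map_add' := fun γ η => by
        ext s
        exact intervalIntegral.integral_add ((continuous_extendPath γ).intervalIntegrable _ _)
          ((continuous_extendPath η).intervalIntegrable _ _)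
      map_smul' := fun c γ => by
        ext s
        exact intervalIntegral.integral_smul c (extendPath γ) } 1
    (fun γ => by
      rw [ContinuousMap.norm_le _ (by positivity), one_mul]
      intro s
      refine (intervalIntegral.norm_integral_le_of_norm_le_const (C := ‖γ‖)
        (fun σ _ => γ.norm_coe_le_norm _)).trans ?_
      rw [sub_zero, abs_of_nonneg s.2.1]
      exact mul_le_of_le_one_right (norm_nonneg _) s.2.2)

theorem primitiveCLM_apply (γ : C(Icc (0 : ℝ) 1, E)) (s : Icc (0 : ℝ) 1) :
    primitiveCLM E γ s = ∫ σ in (0 : ℝ)..s, extendPath γ σ := rfl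

/-- The constant paths, as a continuous linear map. -/
def constPath (E : Type*) [NormedAddCommGroup E] [NormedSpace ℝ E] :
    E →L[ℝ] C(Icc (0 : ℝ) 1, E) :=
  LinearMap.mkContinuous
    { toFun := fun x => ContinuousMap.const _ x
      map_add' := fun x y => by ext s; rfl
      map_smul' := fun c x => by ext s; rfl } 1
    (fun x => by
      rw [ContinuousMap.norm_le _ (by positivity), one_mul]
      exact fun s => le_rfl)

@[simp]
theorem constPath_apply (x : E) (s : Icc (0 : ℝ) 1) : constPath E x s = x := rfl

/-- The map `(ε, x, γ) ↦ (ε, x, γ - x - ε ∫ v ∘ γ)`. The zeros of its last component are the paths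
with `γ(0) = x` and `γ' = ε v(γ)`, that is the integral curves of `v` run at speed `ε`. -/
def picardMap (v : C(E, E)) (p : ℝ × E × C(Icc (0 : ℝ) 1, E)) : ℝ × E × C(Icc (0 : ℝ) 1, E) :=
  (p.1, p.2.1, p.2.2 - constPath E p.2.1 - p.1 • primitiveCLM E (v.comp p.2.2))

/-- The operator `η ↦ (s ↦ Dv(γ(s)) η(s))`, the derivative at `γ` of the superposition operator
`γ ↦ v ∘ γ`. -/
def linearized {v : E → E} (hv : ContDiff ℝ (⊤ : ℕ∞) v) (γ : C(Icc (0 : ℝ) 1, E)) :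
    C(Icc (0 : ℝ) 1, E) →L[ℝ] C(Icc (0 : ℝ) 1, E) :=
  pointwiseApply _ E E
    ((⟨fderiv ℝ v, hv.continuous_fderiv (by simp)⟩ : C(E, E →L[ℝ] E)).comp γ)

theorem contDiff_picardMap {v : E → E} (hv : ContDiff ℝ (⊤ : ℕ∞) v) :
    ContDiff ℝ (⊤ : ℕ∞) (picardMap ⟨v, hv.continuous⟩) := by
  have h3 : ContDiff ℝ (⊤ : ℕ∞) (fun p : ℝ × E × C(Icc (0 : ℝ) 1, E) => p.2.2) :=
    contDiff_snd.comp contDiff_snd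
  have h2 : ContDiff ℝ (⊤ : ℕ∞) (fun p : ℝ × E × C(Icc (0 : ℝ) 1, E) => p.2.1) :=
    contDiff_fst.comp contDiff_snd
  exact contDiff_fst.prodMk (h2.prodMk ((h3.sub ((constPath E).contDiff.comp h2)).sub
    (contDiff_fst.smul ((primitiveCLM E).contDiff.comp ((contDiff_superposition hv).comp h3)))))

theorem fderiv_picardMap_apply {v : E → E} (hv : ContDiff ℝ (⊤ : ℕ∞) v)
    (p w : ℝ × E × C(Icc (0 : ℝ) 1, E)) :
    fderiv ℝ (picardMap ⟨v, hv.continuous⟩) p w =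
      (w.1, w.2.1, w.2.2 - constPath E w.2.1 -
        (p.1 • primitiveCLM E (linearized hv p.2.2 w.2.2) +
          w.1 • primitiveCLM E ((⟨v, hv.continuous⟩ : C(E, E)).comp p.2.2))) := by
  have h1 := hasFDerivAt_fst (𝕜 := ℝ) (p := p)
  have h23 := hasFDerivAt_snd (𝕜 := ℝ) (p := p)
  have h2 := (hasFDerivAt_fst (𝕜 := ℝ) (p := p.2)).comp p h23
  have h3 := (hasFDerivAt_snd (𝕜 := ℝ) (p := p.2)).comp p h23
  have hs := (hasFDerivAt_superposition (K := Icc (0 : ℝ) 1) (hv.of_le (by simp)) p.2.2).comp p h3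
  have hI := (primitiveCLM E).hasFDerivAt.comp p hs
  have hc := (constPath E).hasFDerivAt.comp p h2
  have key := h1.prodMk (h2.prodMk ((h3.sub hc).sub (h1.smul hI)))
  have : HasFDerivAt (picardMap ⟨v, hv.continuous⟩) _ p := key
  rw [this.fderiv]
  rfl

/-- Along an integral curve `γ` run at speed `ε`, the path `s ↦ s v(γ(s))` solves the equation
obtained by differentiating `γ = x + ε ∫ v ∘ γ` in `ε`. -/
theorem variation_equation [CompleteSpace E] {v : E → E} (hv : ContDiff ℝ (⊤ : ℕ∞) v) {ε : ℝ}
    {x : E} {γ : C(Icc (0 : ℝ) 1, E)}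
    (hγ : γ = constPath E x + ε • primitiveCLM E ((⟨v, hv.continuous⟩ : C(E, E)).comp γ))
    {η : C(Icc (0 : ℝ) 1, E)} (hη : ∀ s, η s = (s : ℝ) • v (γ s)) :
    η = ε • primitiveCLM E (linearized hv γ η) +
      primitiveCLM E ((⟨v, hv.continuous⟩ : C(E, E)).comp γ) := by
  have hcont : Continuous (fun σ => v (extendPath γ σ)) :=
    hv.continuous.comp (continuous_extendPath γ)
  -- `g` agrees with `γ` on `[0, 1]` and is differentiable on the whole line.
  let g : ℝ → E := fun s => x + ε • ∫ σ in (0 : ℝ)..s, v (extendPath γ σ)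
  have hg : ∀ s, HasDerivAt g (ε • v (extendPath γ s)) s := fun s =>
    ((intervalIntegral.integral_hasDerivAt_right (hcont.intervalIntegrable _ _)
      (hcont.stronglyMeasurableAtFilter _ _) hcont.continuousAt).const_smul ε).const_add x
  have hgγ : ∀ s ∈ Icc (0 : ℝ) 1, g s = extendPath γ s := by
    intro s hs
    rw [extendPath_of_mem γ hs, hγ]
    rfl
  have hderiv : ∀ s, HasDerivAt (fun s => s • v (g s))
      (s • fderiv ℝ v (g s) (ε • v (extendPath γ s)) + (1 : ℝ) • v (g s)) s := fun s =>
    (hasDerivAt_id s).smul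
      (((hv.differentiable (by simp)) (g s)).hasFDerivAt.comp_hasDerivAt s (hg s))
  have hgc : Continuous g := continuous_iff_continuousAt.2 fun s => (hg s).continuousAt
  have hdc : Continuous (fun s =>
      s • fderiv ℝ v (g s) (ε • v (extendPath γ s)) + (1 : ℝ) • v (g s)) :=
    (continuous_id.smul (((hv.continuous_fderiv (by simp)).comp hgc).clm_apply
      (hcont.const_smul ε))).add ((hv.continuous.comp hgc).const_smul 1)
  ext s
  have hFTC := intervalIntegral.integral_eq_sub_of_hasDerivAt (a := 0) (b := (s : ℝ))
    (fun σ _ => hderiv σ) (hdc.intervalIntegrable _ _)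
  rw [zero_smul, sub_zero, hgγ s s.2, extendPath_of_mem γ s.2] at hFTC
  rw [hη, ← hFTC]
  simp only [ContinuousMap.add_apply, ContinuousMap.smul_apply, primitiveCLM_apply]
  rw [← intervalIntegral.integral_smul, ← intervalIntegral.integral_add
    (f := fun σ => ε • extendPath (linearized hv γ η) σ)
    (((continuous_extendPath _).const_smul ε).intervalIntegrable _ _)
    ((continuous_extendPath _).intervalIntegrable _ _)]
  refine intervalIntegral.integral_congr fun σ hσ => ?_
  rw [uIcc_of_le s.2.1] at hσ
  have hσ1 : σ ∈ Icc (0 : ℝ) 1 := ⟨hσ.1, hσ.2.trans s.2.2⟩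
  simp only [hgγ σ hσ1, extendPath_of_mem _ hσ1, linearized, pointwiseApply_apply, hη,
    ContinuousMap.comp_apply, ContinuousMap.coe_mk, map_smul, one_smul]
  rw [smul_comm]

/-- Smooth dependence of the flow on time and initial position: near `(0, x₀)` there is a smooth
map `Φ` with `∂Φ/∂ε = v ∘ Φ` and `Φ(0, x) = x` to first order at `x₀`. -/
theorem exists_smooth_flow [CompleteSpace E] {v : E → E} (hv : ContDiff ℝ (⊤ : ℕ∞) v) (x₀ : E) :
    ∃ (Φ : ℝ × E → E) (N : Set (ℝ × E)), IsOpen N ∧ (0, x₀) ∈ N ∧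
      ContDiffOn ℝ (⊤ : ℕ∞) Φ N ∧ Φ (0, x₀) = x₀ ∧
      (∀ q ∈ N, fderiv ℝ Φ q (1, 0) = v (Φ q)) ∧
      (∀ w, fderiv ℝ Φ (0, x₀) (0, w) = w) := by
  let P := ℝ × E × C(Icc (0 : ℝ) 1, E)
  let G : P → P := picardMap ⟨v, hv.continuous⟩
  have hG : ContDiff ℝ (⊤ : ℕ∞) G := contDiff_picardMap hv
  have hGd : ∀ p, HasFDerivAt G (fderiv ℝ G p) p := fun p =>
    (hG.differentiable (by simp) p).hasFDerivAt
  let p₀ : P := (0, x₀, constPath E x₀)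
  -- At `ε = 0` the derivative of `G` is a shear, whose inverse is the opposite shear.
  let c : C(Icc (0 : ℝ) 1, E) :=
    primitiveCLM E ((⟨v, hv.continuous⟩ : C(E, E)).comp (constPath E x₀))
  let pr3 : P →L[ℝ] C(Icc (0 : ℝ) 1, E) :=
    (ContinuousLinearMap.snd ℝ _ _).comp (ContinuousLinearMap.snd ℝ _ _)
  let pr2 : P →L[ℝ] E := (ContinuousLinearMap.fst ℝ _ _).comp (ContinuousLinearMap.snd ℝ _ _)
  let pr1 : P →L[ℝ] ℝ := ContinuousLinearMap.fst ℝ _ _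
  let inv : P →L[ℝ] P := pr1.prod (pr2.prod (pr3 + (constPath E).comp pr2 + pr1.smulRight c))
  have hD₀ : ∀ w, fderiv ℝ G p₀ w = (w.1, w.2.1, w.2.2 - constPath E w.2.1 - w.1 • c) := by
    intro w
    rw [fderiv_picardMap_apply hv]
    simp [p₀, c]
  have hinv : ∀ w, inv w = (w.1, w.2.1, w.2.2 + constPath E w.2.1 + w.1 • c) := fun w => rfl
  let A : P ≃L[ℝ] P := ContinuousLinearEquiv.equivOfInverse (fderiv ℝ G p₀) inv
    (fun w => by rw [hD₀, hinv]; ext1; · rfl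
                 ext1; · rfl
                 dsimp only; abel)
    (fun w => by rw [hD₀, hinv]; ext1; · rfl
                 ext1; · rfl
                 dsimp only; abel)
  obtain ⟨e, hp₀, -, heG, hB, hsymm⟩ := exists_smooth_openPartialHomeomorph isOpen_univ
    hG.contDiffOn (mem_univ p₀) A (hGd p₀)
  have hGp₀ : G p₀ = (0, x₀, 0) := by simp [G, p₀, picardMap]
  have he₀ : e.symm (0, x₀, 0) = p₀ := by rw [← hGp₀, ← heG, e.left_inv hp₀]
  let ι : ℝ × E →L[ℝ] P := (ContinuousLinearMap.fst ℝ ℝ E).prod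
    ((ContinuousLinearMap.snd ℝ ℝ E).prod 0)
  let ev : P →L[ℝ] E := (ContinuousMap.evalCLM ℝ (⟨1, by simp⟩ : Icc (0 : ℝ) 1)).comp pr3
  -- A tangent vector is pushed forward by `Φ` by solving the linearized equation.
  have hderiv : ∀ q : ℝ × E, ι q ∈ e.target → ∀ w : ℝ × E, ∀ y : P,
      fderiv ℝ G (e.symm (ι q)) y = ι w → fderiv ℝ (fun q => ev (e.symm (ι q))) q w = ev y := by
    intro q hq w y hy
    obtain ⟨B, hB'⟩ := hB _ (e.map_target hq)
    have hB'' : HasFDerivAt e (B : P →L[ℝ] P) (e.symm (ι q)) := by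
      rwa [show (e : P → P) = G from funext heG]
    have h1 := e.hasFDerivAt_symm hq hB''
    have h2 := (ev.hasFDerivAt (x := e.symm (ι q))).comp q (h1.comp q (ι.hasFDerivAt (x := q)))
    have h3 : fderiv ℝ (fun q => ev (e.symm (ι q))) q = _ := h2.fderiv
    rw [h3]
    rw [hB'.fderiv] at hy
    change ev (B.symm (ι w)) = ev y
    rw [← hy]
    simp
  refine ⟨fun q => ev (e.symm (ι q)), ι ⁻¹' e.target, e.open_target.preimage ι.continuous, ?_, ?_,
    ?_, ?_, ?_⟩
  · have := e.map_source hp₀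
    rwa [heG, hGp₀] at this
  · exact ev.contDiff.comp_contDiffOn (hsymm.comp ι.contDiff.contDiffOn fun q hq => hq)
  · change ev (e.symm (0, x₀, 0)) = x₀
    rw [he₀]
    rfl
  · intro q hq
    obtain ⟨ε, x⟩ := q
    have hGp : G (e.symm (ι (ε, x))) = (ε, x, 0) := by rw [← heG, e.right_inv hq]; rfl
    obtain ⟨⟨ε', x', γ⟩, hp⟩ : ∃ p, e.symm (ι (ε, x)) = p := ⟨_, rfl⟩
    rw [hp] at hGp
    have hγ : γ - constPath E x' -
        ε' • primitiveCLM E ((⟨v, hv.continuous⟩ : C(E, E)).comp γ) = 0 :=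
      congrArg (fun p : P => p.2.2) hGp
    let η : C(Icc (0 : ℝ) 1, E) := ⟨fun s => (s : ℝ) • v (γ s),
      continuous_subtype_val.smul (hv.continuous.comp γ.continuous)⟩
    have hη := variation_equation hv (ε := ε') (x := x') (γ := γ) (η := η)
      (by rw [sub_sub, sub_eq_zero] at hγ; exact hγ) (fun s => rfl)
    rw [hderiv _ hq (1, 0) (1, 0, η)]
    · simp only [hp]
      change (1 : ℝ) • v (γ _) = v (γ _)
      rw [one_smul]
    · rw [hp, fderiv_picardMap_apply hv]
      change (1, 0, _) = ((1 : ℝ), (0 : E), (0 : C(Icc (0 : ℝ) 1, E)))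
      simp only [map_zero, sub_zero, one_smul, ← hη, sub_self]
  · intro w
    have h0 : ι (0, x₀) ∈ e.target := by
      have := e.map_source hp₀
      rwa [heG, hGp₀] at this
    rw [hderiv _ h0 (0, w) (0, w, constPath E w)]
    · rfl
    · change fderiv ℝ G (e.symm (0, x₀, 0)) _ = _
      rw [he₀, hD₀]
      simp only [sub_self, zero_smul]
      rfl

end Flow

/-! ### Straightening of the vector field -/

section FirstIntegrals

/-- Straightening of a nonvanishing vector field: near `x₀` there are smooth coordinates `ψ` in
which `v` becomes the constant field `e₀`, so the other two coordinates are first integrals. -/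
theorem exists_straightening {v : E3 → E3} (hv : ContDiff ℝ (⊤ : ℕ∞) v) {x₀ : E3}
    (hv0 : v x₀ ≠ 0) :
    ∃ (V : Set E3) (ψ : E3 → E3), IsOpen V ∧ x₀ ∈ V ∧ ContDiffOn ℝ (⊤ : ℕ∞) ψ V ∧
      ∀ x ∈ V, ∃ B : E3 ≃L[ℝ] E3, HasFDerivAt ψ (B : E3 →L[ℝ] E3) x ∧
        B (v x) = EuclideanSpace.single 0 1 := by
  obtain ⟨Φ, N, hN, h0N, hΦ, hΦ0, hΦv, hΦw⟩ := exists_smooth_flow hv x₀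
  obtain ⟨A, hA⟩ := SeparatingDual.exists_continuousLinearEquiv_apply_eq (R := ℝ)
    (x := (EuclideanSpace.single 0 1 : E3)) (y := v x₀) (by simp) hv0
  -- `Ψ(z) = Φ(z₀, x₀ + z₁ A e₁ + z₂ A e₂)`: flow out of a plane transverse to `v x₀`.
  let π : E3 →L[ℝ] ℝ := EuclideanSpace.proj 0
  let L : E3 →L[ℝ] ℝ × E3 := π.prod ((A : E3 →L[ℝ] E3) - π.smulRight (v x₀))
  let Ψ : E3 → E3 := fun z => Φ ((0, x₀) + L z)
  let O : Set E3 := (fun z => (0, x₀) + L z) ⁻¹' N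
  have hO : IsOpen O := hN.preimage (continuous_const.add L.continuous)
  have h0O : (0 : E3) ∈ O := by simpa [O] using h0N
  have hΨ : ContDiffOn ℝ (⊤ : ℕ∞) Ψ O :=
    hΦ.comp (contDiff_const.add L.contDiff).contDiffOn fun z hz => hz
  have hΨ' : ∀ z ∈ O, HasFDerivAt Ψ ((fderiv ℝ Φ ((0, x₀) + L z)).comp L) z := fun z hz =>
    (((hΦ.contDiffAt (hN.mem_nhds hz)).differentiableAt (by simp)).hasFDerivAt).comp z
      (L.hasFDerivAt.const_add (0, x₀))
  have hA' : (fderiv ℝ Φ ((0, x₀) + L 0)).comp L = (A : E3 →L[ℝ] E3) := by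
    ext1 w
    have hw : L w = π w • ((1 : ℝ), (0 : E3)) + ((0 : ℝ), A w - π w • v x₀) := by
      simp [L]
    rw [map_zero, add_zero, ContinuousLinearMap.comp_apply, hw, map_add, map_smul,
      hΦv _ h0N, hΦw, hΦ0]
    simp
  obtain ⟨e, h0e, heO, heΨ, hB, hsymm⟩ := exists_smooth_openPartialHomeomorph hO hΨ h0O A
    (hA' ▸ hΨ' 0 h0O)
  have hΨ0 : Ψ 0 = x₀ := by simp [Ψ, hΦ0]
  refine ⟨e.target, e.symm, e.open_target, ?_, hsymm, fun x hx => ?_⟩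
  · rw [← hΨ0, ← heΨ]
    exact e.map_source h0e
  · have hp := e.map_target hx
    obtain ⟨B, hB'⟩ := hB _ hp
    refine ⟨B.symm, e.hasFDerivAt_symm hx ?_, ?_⟩
    · rwa [show (e : E3 → E3) = Ψ from funext heΨ]
    · rw [ContinuousLinearEquiv.symm_apply_eq]
      have hx' : Ψ (e.symm x) = x := by rw [← heΨ, e.right_inv hx]
      have hL : L (EuclideanSpace.single 0 1) = ((1 : ℝ), (0 : E3)) := by
        simp [L, π, hA]
      have h1 : (B : E3 →L[ℝ] E3) (EuclideanSpace.single 0 1) = v (Ψ (e.symm x)) := by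
        rw [hB'.unique (hΨ' _ (heO hp)), ContinuousLinearMap.comp_apply, hL]
        exact hΦv _ (heO hp)
      rw [hx'] at h1
      exact h1.symm

/-- A vector field smooth on an open set agrees near each point with one smooth on all of space. -/
theorem exists_global_extension {v : E3 → E3} {U : Set E3} (hU : IsOpen U)
    (hv : ContDiffOn ℝ (⊤ : ℕ∞) v U) {x₀ : E3} (hx₀ : x₀ ∈ U) :
    ∃ (w : E3 → E3) (V : Set E3), ContDiff ℝ (⊤ : ℕ∞) w ∧ IsOpen V ∧ x₀ ∈ V ∧ V ⊆ U ∧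
      ∀ x ∈ V, w x = v x := by
  obtain ⟨r, hr, hrU⟩ := Metric.nhds_basis_closedBall.mem_iff.1 (hU.mem_nhds hx₀)
  let f : ContDiffBump x₀ := ⟨r / 2, r, by positivity, by linarith⟩
  refine ⟨fun x => f x • v x, Metric.ball x₀ (r / 2), ?_, Metric.isOpen_ball,
    Metric.mem_ball_self (by positivity), ?_, fun x hx => ?_⟩
  · rw [contDiff_iff_contDiffAt]
    intro x
    by_cases hx : x ∈ Metric.closedBall x₀ r
    · exact f.contDiffAt.smul (hv.contDiffAt (hU.mem_nhds (hrU hx)))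
    · refine (contDiffAt_const (c := (0 : E3))).congr_of_eventuallyEq ?_
      filter_upwards [Metric.isClosed_closedBall.isOpen_compl.mem_nhds hx] with y hy
      have : r ≤ dist y x₀ := le_of_lt (by simpa using hy)
      rw [f.zero_of_le_dist this, zero_smul]
  · exact (Metric.ball_subset_ball (by linarith)).trans (Metric.ball_subset_closedBall.trans hrU)
  · simp only [f.one_of_mem_closedBall (Metric.ball_subset_closedBall hx), one_smul]

end FirstIntegrals

/-! ### Gradients and curl -/

section VectorCalculus

theorem grad_apply (f : E3 → ℝ) (x : E3) (i : Fin 3) : grad f x i = pd i f x := by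
  fin_cases i <;> rfl

theorem dot_grad (f : E3 → ℝ) (x u : E3) : dot (grad f x) u = fderiv ℝ f x u := by
  have hu : u = ∑ i, u i • (EuclideanSpace.single i 1 : E3) := by
    ext j
    simp [Fin.sum_univ_three]
    fin_cases j <;> simp
  conv_rhs => rw [hu]
  simp [dot, grad_apply, pd, mul_comm]

theorem curl_grad {f : E3 → ℝ} {x : E3} (hf : ContDiffAt ℝ (⊤ : ℕ∞) f x) :
    curl (grad f) x = 0 := by
  have hd : DifferentiableAt ℝ (fderiv ℝ f) x :=
    (hf.fderiv_right (m := (⊤ : ℕ∞)) (by simp)).differentiableAt (by simp)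
  have h2 : ∀ i j, pd i (fun y => grad f y j) x =
      fderiv ℝ (fderiv ℝ f) x (EuclideanSpace.single i 1) (EuclideanSpace.single j 1) := by
    intro i j
    have h : (fun y => grad f y j) = fun y => fderiv ℝ f y (EuclideanSpace.single j 1) :=
      funext fun y => grad_apply f y j
    rw [h, pd, (hd.hasFDerivAt.clm_apply (hasFDerivAt_const _ x)).fderiv]
    simp
  have hsymm : IsSymmSndFDerivAt ℝ f x :=
    hf.isSymmSndFDerivAt (by
      rw [minSmoothness_of_isRCLikeNormedField]
      exact WithTop.coe_le_coe.2 (le_top (a := (2 : ℕ∞))))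
  have h3 : ∀ i j, pd i (fun y => grad f y j) x - pd j (fun y => grad f y i) x = 0 := by
    intro i j
    rw [h2, h2, hsymm.eq, sub_self]
  ext k
  fin_cases k
  · exact h3 1 2
  · exact h3 2 0
  · exact h3 0 1

theorem contDiffOn_grad {f : E3 → ℝ} {V : Set E3} (hV : IsOpen V)
    (hf : ContDiffOn ℝ (⊤ : ℕ∞) f V) : ContDiffOn ℝ (⊤ : ℕ∞) (grad f) V := by
  rw [contDiffOn_euclidean]
  intro i
  simp only [grad_apply, pd]
  exact (hf.fderiv_of_isOpen hV (by simp)).clm_apply contDiffOn_const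

end VectorCalculus

/-- every vector field admitting a smooth Serret–Frenet frame
locally possesses two compatible, pointwise linearly independent Poisson
vectors orthogonal to it. -/
theorem local_bihamiltonian_structure
    (U : Set E3) (hU : IsOpen U) (v t n b : E3 → E3)
    (hv : ContDiffOn ℝ (⊤ : ℕ∞) v U) (hv0 : ∀ x ∈ U, v x ≠ 0)
    (hframe : IsFrameOn t n b U)
    (ht : ∀ x ∈ U, t x = ‖v x‖⁻¹ • v x) :
    ∀ x₀ ∈ U, ∃ V : Set E3, IsOpen V ∧ x₀ ∈ V ∧ V ⊆ U ∧
      ∃ J₁ J₂ : E3 → E3,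
        ContDiffOn ℝ (⊤ : ℕ∞) J₁ V ∧ ContDiffOn ℝ (⊤ : ℕ∞) J₂ V ∧
        (∀ x ∈ V, LinearIndependent ℝ ![J₁ x, J₂ x]) ∧
        (∀ x ∈ V, dot (J₁ x) (v x) = 0) ∧
        (∀ x ∈ V, dot (J₂ x) (v x) = 0) ∧
        (∀ x ∈ V, dot (J₁ x) (curl J₁ x) = 0) ∧
        (∀ x ∈ V, dot (J₂ x) (curl J₂ x) = 0) ∧
        (∀ x ∈ V, dot (J₁ x) (curl J₂ x) + dot (J₂ x) (curl J₁ x) = 0) := by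
  intro x₀ hx₀
  obtain ⟨w, W, hw, hW, hx₀W, hWU, hwv⟩ := exists_global_extension hU hv hx₀
  obtain ⟨V, ψ, hV, hx₀V, hψ, hB⟩ := exists_straightening hw (x₀ := x₀)
    (by rw [hwv x₀ hx₀W]; exact hv0 x₀ hx₀)
  have hVW : IsOpen (V ∩ W) := hV.inter hW
  have hcoord : ∀ i, ContDiffOn ℝ (⊤ : ℕ∞) (fun x => ψ x i) (V ∩ W) := fun i =>
    contDiffOn_euclidean.1 (hψ.mono Set.inter_subset_left) i
  have hderiv : ∀ x ∈ V, ∀ B : E3 ≃L[ℝ] E3, HasFDerivAt ψ (B : E3 →L[ℝ] E3) x →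
      ∀ (i : Fin 3) (u : E3), dot (grad (fun x => ψ x i) x) u = B u i := by
    intro x _ B hBx i u
    have h : HasFDerivAt (fun x => ψ x i) _ x :=
      (EuclideanSpace.proj i : E3 →L[ℝ] ℝ).hasFDerivAt.comp x hBx
    rw [dot_grad, h.fderiv]
    rfl
  have hcurl : ∀ x ∈ V ∩ W, ∀ i, curl (grad fun x => ψ x i) x = 0 := fun x hx i =>
    curl_grad ((hcoord i).contDiffAt (hVW.mem_nhds hx))
  have hdot0 : ∀ u : E3, dot u 0 = 0 := fun u => by simp [dot]
  refine ⟨V ∩ W, hVW, ⟨hx₀V, hx₀W⟩, Set.inter_subset_right.trans hWU,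
    grad fun x => ψ x 1, grad fun x => ψ x 2, contDiffOn_grad hVW (hcoord 1),
    contDiffOn_grad hVW (hcoord 2), fun x hx => ?_, fun x hx => ?_, fun x hx => ?_,
    fun x hx => ?_, fun x hx => ?_, fun x hx => ?_⟩
  · obtain ⟨B, hBx, -⟩ := hB x hx.1
    rw [LinearIndependent.pair_iff]
    intro a c hac
    -- Pair the relation with the vectors that `B` sends to `e₁` and `e₂`.
    have hpair : ∀ u : E3, a * B u 1 + c * B u 2 = 0 := by
      intro u
      rw [← hderiv x hx.1 B hBx 1 u, ← hderiv x hx.1 B hBx 2 u]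
      have := congrArg (fun z => dot z u) hac
      simp only [dot, Fin.sum_univ_three, PiLp.add_apply, PiLp.smul_apply, smul_eq_mul,
        PiLp.zero_apply] at this ⊢
      linarith
    constructor
    · simpa using hpair (B.symm (EuclideanSpace.single 1 1))
    · simpa using hpair (B.symm (EuclideanSpace.single 2 1))
  · obtain ⟨B, hBx, hBv⟩ := hB x hx.1
    rw [hderiv x hx.1 B hBx, ← hwv x hx.2, hBv]
    simp
  · obtain ⟨B, hBx, hBv⟩ := hB x hx.1
    rw [hderiv x hx.1 B hBx, ← hwv x hx.2, hBv]
    simp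
  · rw [hcurl x hx, hdot0]
  · rw [hcurl x hx, hdot0]
  · rw [hcurl x hx, hcurl x hx, hdot0, hdot0, add_zero]
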